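/- Let Ξ = {ξ ∈ ℝ^K : Uξ ≤ t} be compact with nonempty interior, let μ lie in the interior of Ξ, let σ ∈ ℝ^K with σ_k > 0 for all k, let a ∈ ℝ^K, b ∈ ℝ, ε ∈ (0,1), and suppose there exists ξ in the interior of Ξ with a^T ξ > b. Then the distributionally robust chance constraint inf_{P ∈ P₁} P({ξ : a^T ξ ≤ b}) ≥ 1 − ε holds, where P₁ is the set of all Borel probability measures P on ℝ^K with P(Ξ) = 1, ∫ ξ dP(ξ) = μ, and ∫ |ξ_k − μ_k| dP(ξ) ≤ σ_k for all k, if and only if there exist α' ∈ ℝ, β' ∈ ℝ^K, κ' ∈ ℝ^K with κ' ≥ 0, λ' ≥ 0, and π'₁, τ'₁, π'₂, τ'₂ ∈ ℝ^K, ψ'₁, ψ'₂ ∈ ℝ^W, all componentwise nonnegative, satisfying: α' + β'^T μ − κ'^T σ ≥ (1 − ε) λ'; α' + (π'₁ − τ'₁)^T μ + ψ'₁^T t ≤ λ'; β' + τ'₁ = π'₁ + U^T ψ'₁; π'₁ + τ'₁ = κ'; α' + (π'₂ − τ'₂)^T μ + ψ'₂^T t ≤ b; β' + a + τ'₂ =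 π'₂ + U^T ψ'₂; π'₂ + τ'₂ = κ'. -/

import Mathlib

open Matrix MeasureTheory

/-!
Three dualizations. The worst case over the ambiguity set is linear in the distribution, so a
hyperplane supporting the convex set of attainable (probability, mean, deviation) triples is an
affine-minus-deviation function `f` on the support that lies below the level `lam` everywhere and
below `0` where `aᵀξ > b`. Slater's condition turns the latter into `f ≤ w (b - aᵀξ)` for a
multiplier `w`, which is positive because `f` is positive at the mean; dividing by `w` removes the
product of unknowns. Farkas' lemma finally replaces each inequality over the polyhedron by
finitely many.
-/

section Farkas

variable {𝕜 : Type*} [Field 𝕜] [LinearOrder 𝕜] [IsStrictOrderedRing 𝕜]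

theorem nonpos_of_forall_pos_le_mul {u v : 𝕜} (h : ∀ δ > 0, u ≤ δ * v) : u ≤ 0 := by
  by_contra! hu
  have hv : 0 < |v| + 1 := by positivity
  have : u / (|v| + 1) * v < u := by
    rw [div_mul_eq_mul_div, div_lt_iff₀ hv]
    exact mul_lt_mul_of_pos_left ((le_abs_self v).trans_lt (lt_add_one _)) hu
  exact (h _ (div_pos hu hv)).not_gt this

theorem sum_insert_update_smul {ι R M : Type*} [DecidableEq ι] [Semiring R] [AddCommMonoid M]
    [Module R M] {s : Finset ι} {j : ι} (hj : j ∉ s) (c : ι → R) (d : R) (A : ι → M) :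
    ∑ i ∈ insert j s, Function.update c j d i • A i = d • A j + ∑ i ∈ s, c i • A i := by
  rw [Finset.sum_insert hj, Function.update_self]
  congr 1
  exact Finset.sum_congr rfl fun i hi ↦ by
    rw [Function.update_of_ne (ne_of_mem_of_not_mem hi hj)]

/- Bartl's induction: if the constraints in `s` do not suffice, some `y` with `A j y = 1` satisfies
all of them but has `0 < g y`; composing with the projection `x ↦ x - A j x • y` makes the
constraint `j` vacuous. -/
theorem exists_nonneg_eq_sum_smul_of_forall_nonpos {ι V : Type*} [AddCommGroup V] [Module 𝕜 V]
    (s : Finset ι) (A : ι → Module.Dual 𝕜 V) (g : Module.Dual 𝕜 V)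
    (h : ∀ x, (∀ i ∈ s, A i x ≤ 0) → g x ≤ 0) :
    ∃ c : ι → 𝕜, 0 ≤ c ∧ g = ∑ i ∈ s, c i • A i := by
  classical
  induction s using Finset.induction_on generalizing A g with
  | empty =>
    refine ⟨0, le_rfl, LinearMap.ext fun x ↦ le_antisymm (h x (by simp)) ?_⟩
    simpa using h (-x) (by simp)
  | insert j s hj ih =>
    by_cases hs : ∀ x, (∀ i ∈ s, A i x ≤ 0) → g x ≤ 0
    · obtain ⟨c, hc, hg⟩ := ih A g hs
      refine ⟨Function.update c j 0, le_update_iff.2 ⟨le_rfl, fun i _ ↦ hc i⟩, ?_⟩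
      rw [sum_insert_update_smul hj, zero_smul, zero_add, hg]
    obtain ⟨y, hys, hgy, hjy⟩ : ∃ y, (∀ i ∈ s, A i y ≤ 0) ∧ 0 < g y ∧ A j y = 1 := by
      push Not at hs
      obtain ⟨y, hys, hgy⟩ := hs
      have hjy : 0 < A j y := by
        by_contra! hjy
        exact (h y (by simpa [hjy] using hys)).not_gt hgy
      refine ⟨(A j y)⁻¹ • y, fun i hi ↦ ?_, ?_, by simp [hjy.ne']⟩
      · simpa using mul_nonpos_of_nonneg_of_nonpos (inv_nonneg.2 hjy.le) (hys i hi)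
      · simpa using mul_pos (inv_pos.2 hjy) hgy
    let proj : V →ₗ[𝕜] V := LinearMap.id - (A j).smulRight y
    have hproj (ℓ : Module.Dual 𝕜 V) (x : V) : (ℓ ∘ₗ proj) x = ℓ x - A j x * ℓ y := by
      simp [proj]
    obtain ⟨c, hc, hg⟩ := ih (fun i ↦ A i ∘ₗ proj) (g ∘ₗ proj) fun x hx ↦
      h (proj x) ((Finset.forall_mem_insert _ _ _).2 ⟨by simp [proj, hjy], hx⟩)
    refine ⟨Function.update c j (g y - ∑ i ∈ s, c i * A i y),
      le_update_iff.2 ⟨?_, fun i _ ↦ hc i⟩, ?_⟩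
    · have := Finset.sum_nonpos fun i hi ↦ mul_nonpos_of_nonneg_of_nonpos (hc i) (hys i hi)
      exact sub_nonneg.2 (this.trans hgy.le)
    · rw [sum_insert_update_smul hj]
      ext x
      have hgx := LinearMap.congr_fun hg x
      simp only [LinearMap.sum_apply, LinearMap.smul_apply, hproj, smul_eq_mul, mul_sub,
        Finset.sum_sub_distrib, mul_left_comm _ (A j x), ← Finset.mul_sum] at hgx
      simp only [LinearMap.add_apply, LinearMap.sum_apply, LinearMap.smul_apply, smul_eq_mul]
      linear_combination hgx

variable {m n : Type*} [Fintype n] {A : Matrix m n 𝕜} {c : m → 𝕜} {g : n → 𝕜} {γ : 𝕜}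

theorem dotProduct_le_mul_of_mulVec_le_smul (hne : ∃ x, A *ᵥ x ≤ c)
    (h : ∀ x, A *ᵥ x ≤ c → g ⬝ᵥ x ≤ γ) {x : n → 𝕜} {r : 𝕜} (hr : 0 ≤ r) (hx : A *ᵥ x ≤ r • c) :
    g ⬝ᵥ x ≤ γ * r := by
  obtain ⟨x₀, hx₀⟩ := hne
  refine sub_nonpos.1 (nonpos_of_forall_pos_le_mul (v := γ - g ⬝ᵥ x₀) fun δ hδ ↦ ?_)
  have hrδ : 0 < r + δ := by positivity
  have hle : A *ᵥ (x + δ • x₀) ≤ (r + δ) • c := by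
    rw [mulVec_add, mulVec_smul, add_smul]
    exact add_le_add hx (smul_le_smul_of_nonneg_left hx₀ hδ.le)
  have := h ((r + δ)⁻¹ • (x + δ • x₀)) <| by
    rwa [mulVec_smul, inv_smul_le_iff_of_pos hrδ]
  rw [dotProduct_smul, smul_eq_mul, inv_mul_le_iff₀ hrδ, dotProduct_add, dotProduct_smul,
    smul_eq_mul] at this
  linarith

theorem exists_nonneg_vecMul_eq_of_forall_mulVec_le [Fintype m] (hne : ∃ x, A *ᵥ x ≤ c)
    (h : ∀ x, A *ᵥ x ≤ c → g ⬝ᵥ x ≤ γ) :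
    ∃ y : m → 𝕜, 0 ≤ y ∧ y ᵥ* A = g ∧ y ⬝ᵥ c ≤ γ := by
  classical
  let homogenize (v : n → 𝕜) (d : 𝕜) : Module.Dual 𝕜 ((n → 𝕜) × 𝕜) :=
    (dotProductEquiv 𝕜 n v).coprod (-d • LinearMap.id)
  have happly (v : n → 𝕜) (d : 𝕜) (x : n → 𝕜) (r : 𝕜) :
      homogenize v d (x, r) = v ⬝ᵥ x - d * r := by
    simp [homogenize, sub_eq_add_neg]
  obtain ⟨y, hy, hsum⟩ := exists_nonneg_eq_sum_smul_of_forall_nonpos Finset.univ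
    (fun i : Option m ↦ i.elim (-LinearMap.snd 𝕜 (n → 𝕜) 𝕜) fun i ↦ homogenize (A i) (c i))
    (homogenize g γ) <| by
    rintro ⟨x, r⟩ hxr
    simp only [Finset.mem_univ, forall_const, Option.forall, Option.elim, LinearMap.neg_apply,
      LinearMap.snd_apply, happly] at hxr ⊢
    refine sub_nonpos.2 (dotProduct_le_mul_of_mulVec_le_smul hne h (neg_nonpos.1 hxr.1) fun i ↦ ?_)
    simpa [mulVec, mul_comm r] using hxr.2 i
  have hdual (x : n → 𝕜) (r : 𝕜) : g ⬝ᵥ x - γ * r =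
      -(y none * r) + ((y ∘ some) ᵥ* A ⬝ᵥ x - ((y ∘ some) ⬝ᵥ c) * r) := by
    rw [← happly, hsum, ← dotProduct_mulVec]
    simp [happly, mulVec, dotProduct, mul_sub, Finset.sum_mul, mul_assoc]
  refine ⟨y ∘ some, fun i ↦ hy (some i), dotProduct_eq _ _ fun x ↦ ?_, ?_⟩
  · simpa using (hdual x 0).symm
  · have hγ : -γ = -y none - (y ∘ some) ⬝ᵥ c := by simpa [sub_eq_add_neg] using hdual 0 1
    have hy₀ : 0 ≤ y none := hy none
    linarith

end Farkas

section Multiplier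

variable {E : Type*} [AddCommGroup E] [Module ℝ E] {s : Set E} {f g : E → ℝ}

theorem mul_le_mul_of_concaveOn_of_forall_pos (hf : ConcaveOn ℝ s f) (hg : ConcaveOn ℝ s g)
    (h : ∀ x ∈ s, 0 < g x → f x ≤ 0) {x y : E} (hx : x ∈ s) (hy : y ∈ s) (hgx : g x ≤ 0)
    (hgy : 0 < g y) : f x * g y ≤ f y * g x := by
  refine sub_nonpos.1 (nonpos_of_forall_pos_le_mul (v := -f y) fun δ hδ ↦ ?_)
  have hw : 0 < g y + (δ - g x) := by linarith
  -- The weights are proportional to `g y` and `δ - g x`, so that `g z` is just positive.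
  set p := g y / (g y + (δ - g x)) with hp
  set q := (δ - g x) / (g y + (δ - g x)) with hq
  have hp₀ : 0 ≤ p := by positivity
  have hq₀ : 0 ≤ q := div_nonneg (by linarith) hw.le
  have hpq : p + q = 1 := by rw [hp, hq, ← add_div, div_self hw.ne']
  have hgz : 0 < g (p • x + q • y) :=
    calc 0 < δ * g y / (g y + (δ - g x)) := by positivity
      _ = p • g x + q • g y := by rw [hp, hq, smul_eq_mul, smul_eq_mul]; field_simp; ring
      _ ≤ _ := hg.2 hx hy hp₀ hq₀ hpq
  have hfz : p • f x + q • f y ≤ 0 :=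
    (hf.2 hx hy hp₀ hq₀ hpq).trans (h _ (hf.1 hx hy hp₀ hq₀ hpq) hgz)
  rw [smul_eq_mul, smul_eq_mul, hp, hq, div_mul_eq_mul_div, div_mul_eq_mul_div, ← add_div,
    div_le_iff₀ hw, zero_mul] at hfz
  linarith

theorem exists_multiplier_of_slater (hf : ConcaveOn ℝ s f) (hg : ConcaveOn ℝ s g)
    (hslater : ∃ x ∈ s, 0 < g x) (h : ∀ x ∈ s, 0 < g x → f x ≤ 0) :
    ∃ w : ℝ, 0 ≤ w ∧ ∀ x ∈ s, f x + w * g x ≤ 0 := by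
  set T : Set ℝ := (fun y ↦ -f y / g y) '' {y ∈ s | 0 < g y}
  have hT : ∀ v ∈ T, 0 ≤ v := by
    rintro _ ⟨y, ⟨hy, hgy⟩, rfl⟩
    exact div_nonneg (neg_nonneg.2 (h y hy hgy)) hgy.le
  have hTne : T.Nonempty := Set.Nonempty.image _ hslater
  refine ⟨sInf T, Real.sInf_nonneg hT, fun x hx ↦ ?_⟩
  rcases lt_trichotomy (g x) 0 with hgx | hgx | hgx
  · have : f x / -g x ≤ sInf T := le_csInf hTne <| by
      rintro _ ⟨y, ⟨hy, hgy⟩, rfl⟩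
      rw [div_le_div_iff₀ (neg_pos.2 hgx) hgy]
      linarith [mul_le_mul_of_concaveOn_of_forall_pos hf hg h hx hy hgx.le hgy]
    rw [div_le_iff₀ (neg_pos.2 hgx)] at this
    linarith
  · obtain ⟨y, hy, hgy⟩ := hslater
    have := mul_le_mul_of_concaveOn_of_forall_pos hf hg h hx hy hgx.le hgy
    rw [hgx, mul_zero] at this
    simpa [hgx] using nonpos_of_mul_nonpos_left this hgy
  · have : sInf T ≤ -f x / g x := csInf_le ⟨0, hT⟩ ⟨x, ⟨hx, hgx⟩, rfl⟩
    rw [le_div_iff₀ hgx] at this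
    linarith

end Multiplier

section MadMinorant

variable {n : Type*} [Fintype n]

/-- The function `ξ ↦ α + βᵀξ - κᵀ|ξ - c|`, with the absolute value taken componentwise: the
integrand dual to the moment constraints on the mean and on the mean absolute deviation. -/
def madMinorant (α : ℝ) (β κ c ξ : n → ℝ) : ℝ :=
  α + β ⬝ᵥ ξ - κ ⬝ᵥ |ξ - c|

variable {α r : ℝ} {β κ c : n → ℝ}

theorem madMinorant_self : madMinorant α β κ c c = α + β ⬝ᵥ c := by
  simp [madMinorant]

theorem madMinorant_add_left (a ξ : n → ℝ) :
    madMinorant α (β + a) κ c ξ = madMinorant α β κ c ξ + a ⬝ᵥ ξ := by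
  rw [madMinorant, madMinorant, add_dotProduct]
  ring

theorem madMinorant_smul (w : ℝ) (ξ : n → ℝ) :
    madMinorant (w⁻¹ * α) (w⁻¹ • β) (w⁻¹ • κ) c ξ = w⁻¹ * madMinorant α β κ c ξ := by
  simp only [madMinorant, smul_dotProduct, smul_eq_mul]
  ring

theorem concaveOn_madMinorant {s : Set (n → ℝ)} (hs : Convex ℝ s) (hκ : 0 ≤ κ) :
    ConcaveOn ℝ s (madMinorant α β κ c) := by
  refine ⟨hs, fun x _ y _ p q hp hq hpq ↦ ?_⟩
  have habs : |p • x + q • y - c| ≤ p • |x - c| + q • |y - c| := by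
    have : p • x + q • y - c = p • (x - c) + q • (y - c) := by
      rw [smul_sub, smul_sub, sub_add_sub_comm, ← add_smul, hpq, one_smul]
    rw [this]
    refine fun k ↦ (abs_add_le _ _).trans_eq ?_
    simp [abs_mul, abs_of_nonneg hp, abs_of_nonneg hq]
  have := dotProduct_le_dotProduct_of_nonneg_left habs hκ
  simp only [madMinorant, dotProduct_add, dotProduct_smul, smul_eq_mul] at this ⊢
  linear_combination this + α * hpq

theorem eq_zero_of_madMinorant_le {Ξ : Set (n → ℝ)} {σ : n → ℝ} (hc : c ∈ interior Ξ)
    (hσ : ∀ k, 0 < σ k) (hκ : 0 ≤ κ) (h : ∀ ξ ∈ Ξ, madMinorant α β κ c ξ ≤ r)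
    (hr : r ≤ α + β ⬝ᵥ c - κ ⬝ᵥ σ) : β = 0 ∧ κ = 0 := by
  have hκσ : κ ⬝ᵥ σ ≤ 0 := by
    have := h c (interior_subset hc)
    rw [madMinorant_self] at this
    linarith
  have hκ₀ : κ = 0 := by
    funext k
    have hnonneg (k : n) : 0 ≤ κ k * σ k := mul_nonneg (hκ k) (hσ k).le
    have := Finset.single_le_sum (fun i _ ↦ hnonneg i) (Finset.mem_univ k) |>.trans hκσ
    exact le_antisymm (nonpos_of_mul_nonpos_left this (hσ k)) (hκ k)
  subst hκ₀
  have hlim : Filter.Tendsto (fun δ : ℝ ↦ c + δ • β) (nhdsWithin 0 (Set.Ioi 0)) (nhds c) :=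
    tendsto_nhdsWithin_of_tendsto_nhds <| Continuous.tendsto' (by fun_prop) _ _ (by simp)
  obtain ⟨δ, hδΞ, hδ⟩ :=
    ((hlim.eventually (mem_interior_iff_mem_nhds.1 hc)).and self_mem_nhdsWithin).exists
  have hle := h _ hδΞ
  simp only [madMinorant, dotProduct_add, dotProduct_smul, smul_eq_mul, zero_dotProduct,
    sub_zero] at hle hr
  have : β ⬝ᵥ β ≤ 0 := nonpos_of_mul_nonpos_right (by linarith) (Set.mem_Ioi.1 hδ)
  have hβ : 0 ≤ β ⬝ᵥ β := Finset.sum_nonneg fun i _ ↦ mul_self_nonneg (β i)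
  exact ⟨dotProduct_self_eq_zero.1 (this.antisymm hβ), rfl⟩

variable {m : Type*} {U : Matrix m n ℝ} {t : m → ℝ}

/-- The matrix of the system `Uξ ≤ t`, `ξ - z ≤ c`, `-ξ - z ≤ -c` in the variables `(ξ, z)`, whose
last two blocks of rows say `|ξ - c| ≤ z`. -/
def liftedMatrix [DecidableEq n] (U : Matrix m n ℝ) : Matrix (m ⊕ n ⊕ n) (n ⊕ n) ℝ :=
  fromRows (fromCols U 0) (fromBlocks 1 (-1) (-1) (-1))

theorem liftedMatrix_mulVec_le_iff [DecidableEq n] {ξ z : n → ℝ} :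
    liftedMatrix U *ᵥ Sum.elim ξ z ≤ Sum.elim t (Sum.elim c (-c)) ↔
      U *ᵥ ξ ≤ t ∧ |ξ - c| ≤ z := by
  simp only [liftedMatrix, fromRows_mulVec, fromCols_mulVec_sumElim, fromBlocks_mulVec,
    Sum.elim_le_elim_iff, Sum.elim_comp_inl, Sum.elim_comp_inr, neg_mulVec, one_mulVec,
    zero_mulVec, add_zero, abs_le', neg_sub]
  refine and_congr_right' (and_congr ?_ ?_) <;>
    exact forall_congr' fun k ↦ by
      simp only [Pi.add_apply, Pi.sub_apply, Pi.neg_apply]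
      constructor <;> intro <;> linarith

theorem vecMul_liftedMatrix [DecidableEq n] [Fintype m] (ψ : m → ℝ) (π τ : n → ℝ) :
    Sum.elim ψ (Sum.elim π τ) ᵥ* liftedMatrix U = Sum.elim (ψ ᵥ* U + (π - τ)) (-(π + τ)) := by
  simp only [liftedMatrix, sumElim_vecMul_fromRows, vecMul_fromBlocks, vecMul_fromCols,
    vecMul_one, vecMul_neg, vecMul_zero, ← Sum.elim_add_add, Sum.elim_comp_inl,
    Sum.elim_comp_inr, zero_add, sub_eq_add_neg, neg_add]

theorem exists_of_forall_madMinorant_le [Fintype m] (hne : ∃ ξ, U *ᵥ ξ ≤ t) (hκ : 0 ≤ κ)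
    (h : ∀ ξ, U *ᵥ ξ ≤ t → madMinorant α β κ c ξ ≤ r) :
    ∃ (π τ : n → ℝ) (ψ : m → ℝ), 0 ≤ π ∧ 0 ≤ τ ∧ 0 ≤ ψ ∧
      α + (π - τ) ⬝ᵥ c + ψ ⬝ᵥ t ≤ r ∧ β + τ = π + Uᵀ *ᵥ ψ ∧ π + τ = κ := by
  classical
  obtain ⟨ξ₀, hξ₀⟩ := hne
  obtain ⟨y, hy, hyU, hyt⟩ := exists_nonneg_vecMul_eq_of_forall_mulVec_le (A := liftedMatrix U)
    (c := Sum.elim t (Sum.elim c (-c))) (g := Sum.elim β (-κ)) (γ := r - α)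
    ⟨Sum.elim ξ₀ |ξ₀ - c|, liftedMatrix_mulVec_le_iff.2 ⟨hξ₀, le_rfl⟩⟩ fun x hx ↦ by
      rw [← Sum.elim_comp_inl_inr x, liftedMatrix_mulVec_le_iff] at hx
      have hle := h _ hx.1
      have hdev := dotProduct_le_dotProduct_of_nonneg_left hx.2 hκ
      rw [← Sum.elim_comp_inl_inr x, sumElim_dotProduct_sumElim, neg_dotProduct]
      rw [madMinorant] at hle
      linarith
  obtain ⟨ψ, π, τ, rfl⟩ : ∃ ψ π τ, y = Sum.elim ψ (Sum.elim π τ) :=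
    ⟨y ∘ Sum.inl, y ∘ Sum.inr ∘ Sum.inl, y ∘ Sum.inr ∘ Sum.inr, by simp [← Function.comp_assoc]⟩
  rw [vecMul_liftedMatrix, Sum.elim_eq_iff, neg_inj] at hyU
  refine ⟨π, τ, ψ, fun i ↦ hy (.inr (.inl i)), fun i ↦ hy (.inr (.inr i)), fun i ↦ hy (.inl i),
    ?_, ?_, hyU.2⟩
  · simp only [sumElim_dotProduct_sumElim, dotProduct_neg] at hyt
    rw [sub_dotProduct]
    linarith
  · rw [← hyU.1, mulVec_transpose]
    abel

theorem madMinorant_le_of_mulVec_le [Fintype m] {π τ ξ : n → ℝ} {ψ : m → ℝ} (hπ : 0 ≤ π)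
    (hτ : 0 ≤ τ) (hψ : 0 ≤ ψ) (hr : α + (π - τ) ⬝ᵥ c + ψ ⬝ᵥ t ≤ r)
    (hβ : β + τ = π + Uᵀ *ᵥ ψ) (hκ : π + τ = κ) (hξ : U *ᵥ ξ ≤ t) :
    madMinorant α β κ c ξ ≤ r := by
  have hU : Uᵀ *ᵥ ψ ⬝ᵥ ξ ≤ ψ ⬝ᵥ t := by
    rw [mulVec_transpose, ← dotProduct_mulVec]
    exact dotProduct_le_dotProduct_of_nonneg_left hξ hψ
  have hdev : (π - τ) ⬝ᵥ (ξ - c) ≤ κ ⬝ᵥ |ξ - c| := by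
    have hpos := dotProduct_le_dotProduct_of_nonneg_left (le_abs_self (ξ - c)) hπ
    have hneg := dotProduct_le_dotProduct_of_nonneg_left (neg_le_abs (ξ - c)) hτ
    rw [dotProduct_neg] at hneg
    rw [← hκ, sub_dotProduct, add_dotProduct]
    linarith
  rw [eq_sub_of_add_eq hβ, add_sub_right_comm, madMinorant, add_dotProduct]
  rw [dotProduct_sub] at hdev
  linarith

end MadMinorant

section MeanMAD

variable {n : Type*}

/-- The distributions on `Ξ` with mean `m` whose componentwise mean absolute deviation from `c` is
at most `s`; the mean-MAD ambiguity set with mean `μ` and deviation `σ` is the case `c = m = μ`,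
`s = σ`. Integrability is required because the Bochner integral of a nonintegrable function
is `0`. -/
structure MeanMAD (Ξ : Set (n → ℝ)) (c m s : n → ℝ) (P : Measure (n → ℝ)) : Prop where
  isProbabilityMeasure : IsProbabilityMeasure P
  measure_eq_one : P Ξ = 1
  integrable : ∀ k, Integrable (fun ξ ↦ ξ k) P
  mean : ∀ k, ∫ ξ, ξ k ∂P = m k
  mad : ∀ k, ∫ ξ, |ξ k - c k| ∂P ≤ s k

namespace MeanMAD

variable {Ξ S : Set (n → ℝ)} {c m s : n → ℝ} {P : Measure (n → ℝ)}

theorem integrable_abs_sub (h : MeanMAD Ξ c m s P) (k : n) :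
    Integrable (fun ξ ↦ |ξ k - c k|) P :=
  have := h.isProbabilityMeasure
  ((h.integrable k).sub (integrable_const _)).abs

theorem of_isCompact [Finite n] [IsProbabilityMeasure P] (hΞ : IsCompact Ξ) (hP : P Ξ = 1)
    (hmean : ∀ k, ∫ ξ, ξ k ∂P = m k) (hmad : ∀ k, ∫ ξ, |ξ k - c k| ∂P ≤ s k) :
    MeanMAD Ξ c m s P where
  isProbabilityMeasure := inferInstance
  measure_eq_one := hP
  integrable k := by
    rw [← Measure.restrict_eq_self_of_ae_mem ((mem_ae_iff_prob_eq_one hΞ.measurableSet).2 hP)]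
    exact (continuous_apply k).continuousOn.integrableOn_compact hΞ
  mean := hmean
  mad := hmad

theorem dirac [Finite n] {ξ : n → ℝ} (hξ : ξ ∈ Ξ) (hs : |ξ - c| ≤ s) :
    MeanMAD Ξ c ξ s (Measure.dirac ξ) where
  isProbabilityMeasure := inferInstance
  measure_eq_one := Measure.dirac_apply_of_mem hξ
  integrable k := integrable_dirac (by simp)
  mean k := integral_dirac _ _
  mad k := (integral_dirac _ _).trans_le (hs k)

theorem smul_add_smul {m₁ m₂ s₁ s₂ : n → ℝ} {P₁ P₂ : Measure (n → ℝ)} (h₁ : MeanMAD Ξ c m₁ s₁ P₁)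
    (h₂ : MeanMAD Ξ c m₂ s₂ P₂) {p q : ℝ} (hp : 0 ≤ p) (hq : 0 ≤ q) (hpq : p + q = 1) :
    MeanMAD Ξ c (p • m₁ + q • m₂) (p • s₁ + q • s₂)
      (ENNReal.ofReal p • P₁ + ENNReal.ofReal q • P₂) := by
  have := h₁.isProbabilityMeasure
  have := h₂.isProbabilityMeasure
  have hmass : ENNReal.ofReal p + ENNReal.ofReal q = 1 := by
    rw [← ENNReal.ofReal_add hp hq, hpq, ENNReal.ofReal_one]
  have integrable_mix {f : (n → ℝ) → ℝ} (hf₁ : Integrable f P₁) (hf₂ : Integrable f P₂) :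
      Integrable f (ENNReal.ofReal p • P₁ + ENNReal.ofReal q • P₂) :=
    (hf₁.smul_measure ENNReal.ofReal_ne_top).add_measure (hf₂.smul_measure ENNReal.ofReal_ne_top)
  have integral_mix {f : (n → ℝ) → ℝ} (hf₁ : Integrable f P₁) (hf₂ : Integrable f P₂) :
      ∫ ξ, f ξ ∂(ENNReal.ofReal p • P₁ + ENNReal.ofReal q • P₂) =
        p * ∫ ξ, f ξ ∂P₁ + q * ∫ ξ, f ξ ∂P₂ := by
    rw [integral_add_measure (hf₁.smul_measure ENNReal.ofReal_ne_top)
      (hf₂.smul_measure ENNReal.ofReal_ne_top), integral_smul_measure, integral_smul_measure,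
      ENNReal.toReal_ofReal hp, ENNReal.toReal_ofReal hq, smul_eq_mul, smul_eq_mul]
  refine ⟨⟨by simp [hmass]⟩, by simp [h₁.measure_eq_one, h₂.measure_eq_one, hmass],
    fun k ↦ integrable_mix (h₁.integrable k) (h₂.integrable k), fun k ↦ ?_, fun k ↦ ?_⟩
  · rw [integral_mix (h₁.integrable k) (h₂.integrable k), h₁.mean, h₂.mean]
    rfl
  · rw [integral_mix (h₁.integrable_abs_sub k) (h₂.integrable_abs_sub k)]
    exact add_le_add (mul_le_mul_of_nonneg_left (h₁.mad k) hp)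
      (mul_le_mul_of_nonneg_left (h₂.mad k) hq)

variable [Fintype n] {α lam : ℝ} {β κ : n → ℝ}

theorem integrable_madMinorant (h : MeanMAD Ξ c m s P) : Integrable (madMinorant α β κ c) P :=
  have := h.isProbabilityMeasure
  ((integrable_const α).add
    (integrable_finsetSum _ fun k _ ↦ (h.integrable k).const_mul (β k))).sub
    (integrable_finsetSum _ fun k _ ↦ (h.integrable_abs_sub k).const_mul (κ k))

theorem le_integral_madMinorant (h : MeanMAD Ξ c m s P) (hκ : 0 ≤ κ) :
    α + β ⬝ᵥ m - κ ⬝ᵥ s ≤ ∫ ξ, madMinorant α β κ c ξ ∂P := by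
  have := h.isProbabilityMeasure
  have hβ (k : n) := (h.integrable k).const_mul (β k)
  have hκ' (k : n) := (h.integrable_abs_sub k).const_mul (κ k)
  have hsum : Integrable (fun ξ ↦ ∑ k, β k * ξ k) P := integrable_finsetSum _ fun k _ ↦ hβ k
  have hdev : Integrable (fun ξ ↦ ∑ k, κ k * |ξ k - c k|) P :=
    integrable_finsetSum _ fun k _ ↦ hκ' k
  have haff : Integrable (fun ξ ↦ α + ∑ k, β k * ξ k) P := (integrable_const α).add hsum
  have hintegral : ∫ ξ, madMinorant α β κ c ξ ∂P =
      α + β ⬝ᵥ m - κ ⬝ᵥ fun k ↦ ∫ ξ, |ξ k - c k| ∂P := by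
    simp only [madMinorant, dotProduct, Pi.abs_apply, Pi.sub_apply]
    rw [integral_sub haff hdev, integral_add (integrable_const α) hsum,
      integral_finsetSum _ fun k _ ↦ hβ k, integral_finsetSum _ fun k _ ↦ hκ' k]
    simp only [integral_const, probReal_univ, one_smul, integral_const_mul, h.mean]
  rw [hintegral]
  exact sub_le_sub_left (dotProduct_le_dotProduct_of_nonneg_left h.mad hκ) _

theorem le_mul_measureReal (h : MeanMAD Ξ c m s P) (hΞ : MeasurableSet Ξ) (hS : MeasurableSet S)
    (hκ : 0 ≤ κ) (hlam : ∀ ξ ∈ Ξ, madMinorant α β κ c ξ ≤ lam)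
    (hneg : ∀ ξ ∈ Ξ, ξ ∉ S → madMinorant α β κ c ξ ≤ 0) :
    α + β ⬝ᵥ m - κ ⬝ᵥ s ≤ lam * P.real S := by
  have := h.isProbabilityMeasure
  calc α + β ⬝ᵥ m - κ ⬝ᵥ s ≤ ∫ ξ, madMinorant α β κ c ξ ∂P := h.le_integral_madMinorant hκ
    _ ≤ ∫ ξ, S.indicator (fun _ ↦ lam) ξ ∂P := by
      refine integral_mono_ae h.integrable_madMinorant ((integrable_const lam).indicator hS) ?_
      filter_upwards [(mem_ae_iff_prob_eq_one hΞ).2 h.measure_eq_one] with ξ hξ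
      by_cases hξS : ξ ∈ S
      · simpa [hξS] using hlam ξ hξ
      · simpa [hξS] using hneg ξ hξ hξS
    _ = lam * P.real S := by rw [integral_indicator_const _ hS, smul_eq_mul, mul_comm]

end MeanMAD

/-- The triples `(r, m, s)` such that some distribution on `Ξ` with mean `m` and mean absolute
deviation from `c` at most `s` gives `S` probability at most `r`. -/
def attainableMoments (Ξ S : Set (n → ℝ)) (c : n → ℝ) : Set (ℝ × (n → ℝ) × (n → ℝ)) :=
  {v | ∃ P, MeanMAD Ξ c v.2.1 v.2.2 P ∧ P.real S ≤ v.1}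

variable {Ξ S : Set (n → ℝ)} {c : n → ℝ}

theorem convex_attainableMoments : Convex ℝ (attainableMoments Ξ S c) := by
  rintro _ ⟨P₁, h₁, hr₁⟩ _ ⟨P₂, h₂, hr₂⟩ p q hp hq hpq
  have := h₁.isProbabilityMeasure
  have := h₂.isProbabilityMeasure
  have := P₁.smul_finite (ENNReal.ofReal_ne_top (r := p))
  have := P₂.smul_finite (ENNReal.ofReal_ne_top (r := q))
  refine ⟨_, h₁.smul_add_smul h₂ hp hq hpq, ?_⟩
  rw [measureReal_add_apply, measureReal_ennreal_smul_apply, measureReal_ennreal_smul_apply,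
    ENNReal.toReal_ofReal hp, ENNReal.toReal_ofReal hq]
  exact add_le_add (mul_le_mul_of_nonneg_left hr₁ hp) (mul_le_mul_of_nonneg_left hr₂ hq)

theorem notMem_interior_attainableMoments {m s : n → ℝ} {p : ℝ}
    (h : ∀ P, MeanMAD Ξ c m s P → p ≤ P.real S) :
    (p, m, s) ∉ interior (attainableMoments Ξ S c) := by
  intro hmem
  have hlim : Filter.Tendsto (fun r ↦ (r, m, s)) (nhdsWithin p (Set.Iio p)) (nhds (p, m, s)) :=
    (Continuous.tendsto (by fun_prop) p).mono_left nhdsWithin_le_nhds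
  obtain ⟨r, ⟨P, hP, hPr⟩, hr⟩ :=
    ((hlim.eventually (mem_interior_iff_mem_nhds.1 hmem)).and self_mem_nhdsWithin).exists
  exact ((h P hP).trans hPr).not_gt hr

theorem mem_attainableMoments_of_one_le [Finite n] {r : ℝ} {ξ s : n → ℝ} (hξ : ξ ∈ Ξ)
    (hr : 1 ≤ r) (hs : |ξ - c| ≤ s) : (r, ξ, s) ∈ attainableMoments Ξ S c :=
  ⟨.dirac ξ, .dirac hξ hs, measureReal_le_one.trans hr⟩

theorem mem_attainableMoments_of_notMem [Finite n] {ξ : n → ℝ} (hS : MeasurableSet S)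
    (hξ : ξ ∈ Ξ) (hξS : ξ ∉ S) : (0, ξ, |ξ - c|) ∈ attainableMoments Ξ S c :=
  ⟨.dirac ξ, .dirac hξ le_rfl, by simp [measureReal_def, Measure.dirac_apply' ξ hS, hξS]⟩

theorem nonempty_interior_attainableMoments [Finite n] (hΞ : (interior Ξ).Nonempty) :
    (interior (attainableMoments Ξ S c)).Nonempty := by
  obtain ⟨x, hx⟩ := hΞ
  let O : Set (ℝ × (n → ℝ) × (n → ℝ)) :=
    {v | 1 < v.1} ∩ {v | v.2.1 ∈ interior Ξ} ∩ ⋂ k, {v | |v.2.1 k - c k| < v.2.2 k}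
  have hO : IsOpen O :=
    ((isOpen_lt (by fun_prop) (by fun_prop)).inter
      (isOpen_interior.preimage (by fun_prop))).inter
      (isOpen_iInter_of_finite fun k ↦ isOpen_lt (by fun_prop) (by fun_prop))
  refine ⟨(2, x, |x - c| + 1), interior_maximal ?_ hO ⟨⟨by simp, hx⟩, by simp⟩⟩
  rintro ⟨r, y, s⟩ ⟨⟨hr, hy⟩, hs⟩
  exact mem_attainableMoments_of_one_le (interior_subset hy) hr.le fun k ↦
    (Set.mem_iInter.1 hs k).le

variable [Fintype n]

theorem exists_dual_apply_eq (ℓ : Module.Dual ℝ (ℝ × (n → ℝ) × (n → ℝ))) :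
    ∃ (lam : ℝ) (β κ : n → ℝ), ∀ r x s, ℓ (r, x, s) = β ⬝ᵥ x - κ ⬝ᵥ s - lam * r := by
  classical
  refine ⟨-ℓ (1, 0, 0), (dotProductEquiv ℝ n).symm (ℓ ∘ₗ .inr _ _ _ ∘ₗ .inl _ _ _),
    -(dotProductEquiv ℝ n).symm (ℓ ∘ₗ .inr _ _ _ ∘ₗ .inr _ _ _), fun r x s ↦ ?_⟩
  have hsplit : ((r, x, s) : ℝ × (n → ℝ) × (n → ℝ)) = (0, x, 0) + (0, 0, s) + r • (1, 0, 0) := by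
    simp
  rw [hsplit, map_add, map_add, map_smul, smul_eq_mul, mul_comm, neg_dotProduct, neg_mul,
    sub_neg_eq_add, sub_neg_eq_add]
  simp only [← dotProductEquiv_apply_apply, LinearEquiv.apply_symm_apply]
  rfl

theorem exists_supporting_hyperplane_attainableMoments {m s : n → ℝ} {p : ℝ}
    (hΞ : (interior Ξ).Nonempty) (h : ∀ P, MeanMAD Ξ c m s P → p ≤ P.real S) :
    ∃ (lam : ℝ) (β κ : n → ℝ), 0 ≤ lam ∧ 0 ≤ κ ∧ ¬(lam = 0 ∧ β = 0 ∧ κ = 0) ∧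
      ∀ r x z, (r, x, z) ∈ attainableMoments Ξ S c →
        β ⬝ᵥ x - κ ⬝ᵥ z - lam * r ≤ β ⬝ᵥ m - κ ⬝ᵥ s - lam * p := by
  classical
  obtain ⟨ℓ, hℓ, hsupp⟩ := geometric_hahn_banach_of_nonempty_interior_point
    convex_attainableMoments (notMem_interior_attainableMoments h)
    (nonempty_interior_attainableMoments hΞ)
  obtain ⟨lam, β, κ, hform⟩ := exists_dual_apply_eq ℓ.toLinearMap
  rw [ContinuousLinearMap.coe_coe] at hform
  have hle (r : ℝ) (x z : n → ℝ) (hmem : (r, x, z) ∈ attainableMoments Ξ S c) :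
      β ⬝ᵥ x - κ ⬝ᵥ z - lam * r ≤ β ⬝ᵥ m - κ ⬝ᵥ s - lam * p := by
    simpa only [hform] using hsupp _ hmem
  obtain ⟨x₀, hx₀⟩ := hΞ
  -- The attainable moments are unbounded in the probability and deviation coordinates.
  obtain ⟨B, hB⟩ : ∃ B, ∀ r z, 0 ≤ r → 0 ≤ z → -lam * r + -κ ⬝ᵥ z ≤ B := by
    refine ⟨β ⬝ᵥ m - κ ⬝ᵥ s - lam * p - (β ⬝ᵥ x₀ - κ ⬝ᵥ |x₀ - c| - lam), fun r z hr hz ↦ ?_⟩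
    have := hle (1 + r) x₀ (|x₀ - c| + z) <|
      mem_attainableMoments_of_one_le (interior_subset hx₀) (le_add_of_nonneg_right hr)
        (le_add_of_nonneg_right hz)
    rw [dotProduct_add] at this
    rw [neg_dotProduct]
    linarith
  refine ⟨lam, β, κ, neg_nonpos.1 (nonpos_of_forall_pos_le_mul (v := B) fun δ hδ ↦ ?_),
    fun k ↦ neg_nonpos.1 (nonpos_of_forall_pos_le_mul (v := B) fun δ hδ ↦ ?_), ?_, hle⟩
  · have := hB δ⁻¹ 0 (inv_nonneg.2 hδ.le) le_rfl
    rwa [dotProduct_zero, add_zero, ← div_eq_mul_inv, div_le_iff₀' hδ] at this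
  · have := hB 0 (Pi.single k δ⁻¹) le_rfl (Pi.single_nonneg.2 (inv_nonneg.2 hδ.le))
    rwa [mul_zero, zero_add, dotProduct_single, ← div_eq_mul_inv, div_le_iff₀' hδ] at this
  · rintro ⟨rfl, rfl, rfl⟩
    exact hℓ (ContinuousLinearMap.ext fun v ↦ by simpa using hform v.1 v.2.1 v.2.2)

theorem exists_madMinorant_of_forall_le_measureReal {μ σ : n → ℝ} {p : ℝ} (hS : MeasurableSet S)
    (hμ : μ ∈ interior Ξ) (hσ : ∀ k, 0 < σ k) (h : ∀ P, MeanMAD Ξ μ μ σ P → p ≤ P.real S) :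
    ∃ (α : ℝ) (β κ : n → ℝ) (lam : ℝ), 0 ≤ κ ∧ 0 < lam ∧ p * lam ≤ α + β ⬝ᵥ μ - κ ⬝ᵥ σ ∧
      (∀ ξ ∈ Ξ, madMinorant α β κ μ ξ ≤ lam) ∧
      ∀ ξ ∈ Ξ, ξ ∉ S → madMinorant α β κ μ ξ ≤ 0 := by
  obtain ⟨lam, β, κ, hlam, hκ, hne, hle⟩ :=
    exists_supporting_hyperplane_attainableMoments ⟨μ, hμ⟩ h
  set α := p * lam - β ⬝ᵥ μ + κ ⬝ᵥ σ with hα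
  have hbound : ∀ ξ ∈ Ξ, madMinorant α β κ μ ξ ≤ lam := fun ξ hξ ↦ by
    have := hle 1 ξ _ (mem_attainableMoments_of_one_le hξ le_rfl le_rfl)
    rw [madMinorant]
    linarith
  have hneg : ∀ ξ ∈ Ξ, ξ ∉ S → madMinorant α β κ μ ξ ≤ 0 := fun ξ hξ hξS ↦ by
    have := hle 0 ξ _ (mem_attainableMoments_of_notMem hS hξ hξS)
    rw [madMinorant]
    linarith
  refine ⟨α, β, κ, lam, hκ, hlam.lt_of_ne' fun hlam₀ ↦ hne ⟨hlam₀, ?_⟩, by linarith, hbound, hneg⟩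
  rw [hlam₀] at hbound hα
  exact eq_zero_of_madMinorant_le hμ hσ hκ hbound (by linarith)

end MeanMAD

section ChanceConstraint

variable {n : Type*} [Fintype n] {Ξ : Set (n → ℝ)} {μ σ a : n → ℝ} {b p : ℝ}

theorem exists_normalized_madMinorant (hΞ : Convex ℝ Ξ) (hμ : μ ∈ interior Ξ)
    (hσ : ∀ k, 0 < σ k) (hp : 0 < p) (hslater : ∃ ξ ∈ Ξ, b < a ⬝ᵥ ξ)
    (h : ∀ P, MeanMAD Ξ μ μ σ P → p ≤ P.real {ξ | a ⬝ᵥ ξ ≤ b}) :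
    ∃ (α : ℝ) (β κ : n → ℝ) (lam : ℝ), 0 ≤ κ ∧ 0 ≤ lam ∧ p * lam ≤ α + β ⬝ᵥ μ - κ ⬝ᵥ σ ∧
      (∀ ξ ∈ Ξ, madMinorant α β κ μ ξ ≤ lam) ∧ ∀ ξ ∈ Ξ, madMinorant α (β + a) κ μ ξ ≤ b := by
  have hS : MeasurableSet {ξ : n → ℝ | a ⬝ᵥ ξ ≤ b} := measurableSet_le (by fun_prop) (by fun_prop)
  obtain ⟨α, β, κ, lam, hκ, hlam, hvalue, hbound, hneg⟩ :=
    exists_madMinorant_of_forall_le_measureReal hS hμ hσ h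
  have hexcess : ConcaveOn ℝ Ξ fun ξ ↦ a ⬝ᵥ ξ - b :=
    ((dotProductBilin ℝ ℝ a).concaveOn hΞ).sub (convexOn_const b hΞ)
  obtain ⟨w, hw, hmul⟩ := exists_multiplier_of_slater (concaveOn_madMinorant hΞ hκ) hexcess
    (by simpa only [sub_pos] using hslater) fun ξ hξ hξa ↦ hneg ξ hξ (sub_pos.1 hξa).not_ge
  have hw₀ : 0 < w := by
    refine hw.lt_of_ne' fun hw₀ ↦ ?_
    have hle := hmul μ (interior_subset hμ)
    rw [hw₀, zero_mul, add_zero, madMinorant_self] at hle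
    have hκσ : 0 ≤ κ ⬝ᵥ σ := dotProduct_nonneg_of_nonneg hκ fun k ↦ (hσ k).le
    have := mul_pos hp hlam
    linarith
  refine ⟨w⁻¹ * α, w⁻¹ • β, w⁻¹ • κ, w⁻¹ * lam, smul_nonneg (inv_nonneg.2 hw) hκ,
    mul_nonneg (inv_nonneg.2 hw) hlam.le, ?_, fun ξ hξ ↦ ?_, fun ξ hξ ↦ ?_⟩
  · have := mul_le_mul_of_nonneg_left hvalue (inv_nonneg.2 hw)
    simp only [smul_dotProduct, smul_eq_mul]
    linarith
  · rw [madMinorant_smul]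
    exact mul_le_mul_of_nonneg_left (hbound ξ hξ) (inv_nonneg.2 hw)
  · rw [madMinorant_add_left, madMinorant_smul, ← le_sub_iff_add_le, inv_mul_le_iff₀ hw₀]
    linarith [hmul ξ hξ]

theorem le_measureReal_of_normalized_madMinorant (hΞ : MeasurableSet Ξ) (hμ : μ ∈ interior Ξ)
    (hσ : ∀ k, 0 < σ k) (hslater : ∃ ξ ∈ Ξ, b < a ⬝ᵥ ξ) {α lam : ℝ} {β κ : n → ℝ} (hκ : 0 ≤ κ)
    (hlam : 0 ≤ lam) (hvalue : p * lam ≤ α + β ⬝ᵥ μ - κ ⬝ᵥ σ)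
    (hbound : ∀ ξ ∈ Ξ, madMinorant α β κ μ ξ ≤ lam)
    (hexcess : ∀ ξ ∈ Ξ, madMinorant α (β + a) κ μ ξ ≤ b) {P : Measure (n → ℝ)}
    (hP : MeanMAD Ξ μ μ σ P) : p ≤ P.real {ξ | a ⬝ᵥ ξ ≤ b} := by
  have hlam₀ : 0 < lam := by
    refine hlam.lt_of_ne' ?_
    rintro rfl
    obtain ⟨rfl, rfl⟩ := eq_zero_of_madMinorant_le hμ hσ hκ hbound (by simpa using hvalue)
    obtain ⟨ξ, hξ, hξa⟩ := hslater
    have := hexcess ξ hξ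
    simp only [madMinorant, zero_add, zero_dotProduct, sub_zero, add_zero, mul_zero] at this hvalue
    linarith
  have hS : MeasurableSet {ξ : n → ℝ | a ⬝ᵥ ξ ≤ b} := measurableSet_le (by fun_prop) (by fun_prop)
  have hneg : ∀ ξ ∈ Ξ, ξ ∉ {ξ | a ⬝ᵥ ξ ≤ b} → madMinorant α β κ μ ξ ≤ 0 := fun ξ hξ
      (hξa : ¬a ⬝ᵥ ξ ≤ b) ↦ by
    have := hexcess ξ hξ
    rw [madMinorant_add_left] at this
    linarith [not_le.1 hξa]
  refine le_of_mul_le_mul_left ?_ hlam₀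
  calc lam * p = p * lam := mul_comm _ _
    _ ≤ α + β ⬝ᵥ μ - κ ⬝ᵥ σ := hvalue
    _ ≤ lam * P.real {ξ | a ⬝ᵥ ξ ≤ b} := hP.le_mul_measureReal hΞ hS hκ hbound hneg

variable {m : Type*} [Fintype m]

theorem meanMAD_drcc_equivalence_general (U : Matrix m n ℝ) (t : m → ℝ)
    (hμ : μ ∈ interior {ξ | U *ᵥ ξ ≤ t}) (hσ : ∀ k, 0 < σ k) (hp : 0 < p)
    (hslater : ∃ ξ, U *ᵥ ξ ≤ t ∧ b < a ⬝ᵥ ξ) :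
    (∀ P, MeanMAD {ξ | U *ᵥ ξ ≤ t} μ μ σ P → p ≤ P.real {ξ | a ⬝ᵥ ξ ≤ b}) ↔
      ∃ (α' : ℝ) (β' κ' : n → ℝ) (lam' : ℝ) (π'₁ τ'₁ π'₂ τ'₂ : n → ℝ) (ψ'₁ ψ'₂ : m → ℝ),
        0 ≤ κ' ∧ 0 ≤ lam' ∧
        0 ≤ π'₁ ∧ 0 ≤ τ'₁ ∧ 0 ≤ π'₂ ∧ 0 ≤ τ'₂ ∧ 0 ≤ ψ'₁ ∧ 0 ≤ ψ'₂ ∧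
        p * lam' ≤ α' + β' ⬝ᵥ μ - κ' ⬝ᵥ σ ∧
        α' + (π'₁ - τ'₁) ⬝ᵥ μ + ψ'₁ ⬝ᵥ t ≤ lam' ∧
        β' + τ'₁ = π'₁ + Uᵀ *ᵥ ψ'₁ ∧ π'₁ + τ'₁ = κ' ∧
        α' + (π'₂ - τ'₂) ⬝ᵥ μ + ψ'₂ ⬝ᵥ t ≤ b ∧
        β' + a + τ'₂ = π'₂ + Uᵀ *ᵥ ψ'₂ ∧ π'₂ + τ'₂ = κ' := by
  have hne : ∃ ξ, U *ᵥ ξ ≤ t := ⟨μ, interior_subset hμ⟩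
  constructor
  · intro h
    have hconvex : Convex ℝ {ξ | U *ᵥ ξ ≤ t} := (convex_Iic t).linear_preimage U.mulVecLin
    obtain ⟨α, β, κ, lam, hκ, hlam, hvalue, hbound, hexcess⟩ :=
      exists_normalized_madMinorant hconvex hμ hσ hp hslater h
    obtain ⟨π₁, τ₁, ψ₁, hπ₁, hτ₁, hψ₁, hsys₁⟩ := exists_of_forall_madMinorant_le hne hκ hbound
    obtain ⟨π₂, τ₂, ψ₂, hπ₂, hτ₂, hψ₂, hsys₂⟩ := exists_of_forall_madMinorant_le hne hκ hexcess
    exact ⟨α, β, κ, lam, π₁, τ₁, π₂, τ₂, ψ₁, ψ₂, hκ, hlam, hπ₁, hτ₁, hπ₂, hτ₂, hψ₁, hψ₂, hvalue,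
      hsys₁.1, hsys₁.2.1, hsys₁.2.2, hsys₂⟩
  · rintro ⟨α, β, κ, lam, π₁, τ₁, π₂, τ₂, ψ₁, ψ₂, hκ, hlam, hπ₁, hτ₁, hπ₂, hτ₂, hψ₁, hψ₂, hvalue,
      hle₁, hβ₁, hκ₁, hsys₂⟩ P hP
    have hclosed : IsClosed {ξ | U *ᵥ ξ ≤ t} := isClosed_le (by fun_prop) (by fun_prop)
    exact le_measureReal_of_normalized_madMinorant hclosed.measurableSet hμ hσ hslater hκ hlam
      hvalue (fun _ ↦ madMinorant_le_of_mulVec_le hπ₁ hτ₁ hψ₁ hle₁ hβ₁ hκ₁)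
      (fun _ ↦ madMinorant_le_of_mulVec_le hπ₂ hτ₂ hψ₂ hsys₂.1 hsys₂.2.1 hsys₂.2.2) hP

end ChanceConstraint

/-- **Proposition 3 (constraint-level equivalence).** Under the Slater
conditions (compact full-dimensional polyhedral support `Ξ`, mean `μ` in the
interior of `Ξ`, strictly positive MAD bounds `σ`, and a point of `interior Ξ`
violating `aᵀξ ≤ b`), the distributionally robust chance constraint
`inf_{P ∈ P₁} P(aᵀξ ≤ b) ≥ 1 − ε` over the mean-MAD ambiguity set `P₁` holds
iff the finite linear dual system is feasible. -/
theorem meanMAD_drcc_equivalence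
    {K W : ℕ}
    (U : Matrix (Fin W) (Fin K) ℝ) (t : Fin W → ℝ)
    (hΞ : IsCompact {ξ : Fin K → ℝ | U.mulVec ξ ≤ t})
    (hint : (interior {ξ : Fin K → ℝ | U.mulVec ξ ≤ t}).Nonempty)
    (μ σ : Fin K → ℝ)
    (hμ : μ ∈ interior {ξ : Fin K → ℝ | U.mulVec ξ ≤ t})
    (hσ : ∀ k, 0 < σ k)
    (a : Fin K → ℝ) (b : ℝ) (ε : ℝ) (hε : ε ∈ Set.Ioo (0 : ℝ) 1)
    (hslater : ∃ ξ ∈ interior {ξ : Fin K → ℝ | U.mulVec ξ ≤ t}, a ⬝ᵥ ξ > b) :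
    (∀ (P : Measure (Fin K → ℝ)) [IsProbabilityMeasure P],
        P {ξ : Fin K → ℝ | U.mulVec ξ ≤ t} = 1 →
        (∀ k, ∫ ξ, ξ k ∂P = μ k) →
        (∀ k, ∫ ξ, |ξ k - μ k| ∂P ≤ σ k) →
        (P {ξ : Fin K → ℝ | a ⬝ᵥ ξ ≤ b}).toReal ≥ 1 - ε)
      ↔ ∃ (α' : ℝ) (β' κ' : Fin K → ℝ) (lam' : ℝ)
          (π'₁ τ'₁ π'₂ τ'₂ : Fin K → ℝ) (ψ'₁ ψ'₂ : Fin W → ℝ),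
            0 ≤ κ' ∧ 0 ≤ lam' ∧
            0 ≤ π'₁ ∧ 0 ≤ τ'₁ ∧ 0 ≤ π'₂ ∧ 0 ≤ τ'₂ ∧ 0 ≤ ψ'₁ ∧ 0 ≤ ψ'₂ ∧
            α' + β' ⬝ᵥ μ - κ' ⬝ᵥ σ ≥ (1 - ε) * lam' ∧
            α' + (π'₁ - τ'₁) ⬝ᵥ μ + ψ'₁ ⬝ᵥ t ≤ lam' ∧
            β' + τ'₁ = π'₁ + U.transpose.mulVec ψ'₁ ∧
            π'₁ + τ'₁ = κ' ∧
            α' + (π'₂ - τ'₂) ⬝ᵥ μ + ψ'₂ ⬝ᵥ t ≤ b ∧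
            β' + a + τ'₂ = π'₂ + U.transpose.mulVec ψ'₂ ∧
            π'₂ + τ'₂ = κ' := by
  refine Iff.trans ⟨fun h P hP ↦ ?_, fun h P _ hPΞ hmean hmad ↦ ?_⟩
    (meanMAD_drcc_equivalence_general U t hμ hσ (sub_pos.2 hε.2)
      (hslater.imp fun _ hξ ↦ ⟨interior_subset hξ.1, hξ.2⟩))
  · have := hP.isProbabilityMeasure
    exact h P hP.measure_eq_one hP.mean hP.mad
  · exact h P (.of_isCompact hΞ hPΞ hmean hmad)
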